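/- arXiv:gr-qc/0508085 — 2 statements merged into one kernel-verified Lean document; each statement's English description precedes it below -/
import Mathlib

section
/- For all natural numbers n and j with j + 1 ≤ n, writing d_j := C(2n, n+j) − C(2n, n+j+1), the identity d_{j+1} · (n+j+2) · (2j+1) = d_j · (n−j) · (2j+3) holds; consequently d_{j+1} > d_j if and only if n ≥ 2(j+1)². -/
/-!
The absorption identity `C(m, k+1) (k+1) = C(m, k) (m-k)` turns the difference
`C(m, k) - C(m, k+1)` into the product `C(m, k) (2k+1-m) / (k+1)`. Comparing this product at `k`
and at `k + 1` and applying absorption once more gives the ratio of consecutive multiplicities.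
That ratio exceeds `1` exactly when `(k+2) (2k+1-m) < (m-k) (2k+3-m)`; in terms of twice the spin,
`s = 2k - m`, the terms linear in `m s` cancel and the condition becomes `(s+2)² < m + 2`.
-/

/-- The multiplicity of the irreducible representation of `SU(2)` of spin `k - m / 2` in the `m`-th
tensor power of the spin-`1/2` representation: weight vectors with `k` spins up, minus those with
`k + 1` spins up. The spin `j` of a `2n`-fold power corresponds to `m = 2n` and `k = n + j`.
The subtraction truncates to `0` for negative spins, that is for `2k < m`. -/
def spinMultiplicity (m k : ℕ) : ℕ :=
  m.choose k - m.choose (k + 1)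

section

variable (m k : ℕ)

theorem spinMultiplicity_mul_succ_eq_choose_mul :
    spinMultiplicity m k * (k + 1) = m.choose k * (2 * k + 1 - m) := by
  rcases lt_or_ge m k with hmk | hkm
  · simp [spinMultiplicity, Nat.choose_eq_zero_of_lt hmk]
  · have factor_eq : k + 1 - (m - k) = 2 * k + 1 - m := by omega
    rw [spinMultiplicity, Nat.sub_mul, Nat.choose_succ_right_eq, ← Nat.mul_sub, factor_eq]

theorem spinMultiplicity_succ_mul_eq_mul :
    spinMultiplicity m (k + 1) * ((k + 2) * (2 * k + 1 - m)) =
      spinMultiplicity m k * ((m - k) * (2 * k + 3 - m)) := by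
  refine Nat.eq_of_mul_eq_mul_right (Nat.add_one_pos k) ?_
  calc
    _ = spinMultiplicity m (k + 1) * (k + 1 + 1) * ((2 * k + 1 - m) * (k + 1)) := by ring
    _ = m.choose (k + 1) * (k + 1) * ((2 * k + 1 - m) * (2 * k + 3 - m)) := by
      rw [spinMultiplicity_mul_succ_eq_choose_mul, show 2 * (k + 1) + 1 = 2 * k + 3 by ring]
      ring
    _ = m.choose k * (2 * k + 1 - m) * ((m - k) * (2 * k + 3 - m)) := by
      rw [Nat.choose_succ_right_eq]
      ring
    _ = _ := by
      rw [← spinMultiplicity_mul_succ_eq_choose_mul]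
      ring

end

section

variable {m k : ℕ}

theorem spinMultiplicity_pos (hkm : k ≤ m) (hmk : m ≤ 2 * k) : 0 < spinMultiplicity m k := by
  refine Nat.pos_of_mul_pos_right (b := k + 1) ?_
  rw [spinMultiplicity_mul_succ_eq_choose_mul]
  exact Nat.mul_pos (Nat.choose_pos hkm) (by omega)

theorem spinMultiplicity_lt_succ_iff (hkm : k ≤ m) (hmk : m ≤ 2 * k) :
    spinMultiplicity m k < spinMultiplicity m (k + 1) ↔ (2 * k + 2 - m) ^ 2 < m + 2 := by
  have factor_pos : 0 < (k + 2) * (2 * k + 1 - m) := Nat.mul_pos (by omega) (by omega)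
  rw [← Nat.mul_lt_mul_right factor_pos, spinMultiplicity_succ_mul_eq_mul,
    Nat.mul_lt_mul_left (spinMultiplicity_pos hkm hmk)]
  zify [hkm, hmk, show m ≤ 2 * k + 1 by omega, show m ≤ 2 * k + 2 by omega,
    show m ≤ 2 * k + 3 by omega]
  constructor <;> intro <;> linarith

end

/-- With d_j := C(2n, n+j) − C(2n, n+j+1): the ratio identity
d_{j+1}·(n+j+2)·(2j+1) = d_j·(n−j)·(2j+3), and d_{j+1} > d_j ↔ n ≥ 2(j+1)². -/
theorem stmt_8 (n j : ℕ) (h : j + 1 ≤ n)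
    (d : ℕ → ℕ)
    (hd : ∀ i, d i = Nat.choose (2 * n) (n + i) - Nat.choose (2 * n) (n + i + 1)) :
    d (j + 1) * (n + j + 2) * (2 * j + 1) = d j * (n - j) * (2 * j + 3) ∧
      (d (j + 1) > d j ↔ n ≥ 2 * (j + 1) ^ 2) := by
  have d_eq (i : ℕ) : d i = spinMultiplicity (2 * n) (n + i) := hd i
  rw [d_eq, d_eq, ← add_assoc]
  constructor
  · have ratio := spinMultiplicity_succ_mul_eq_mul (2 * n) (n + j)
    rwa [show 2 * (n + j) + 1 - 2 * n = 2 * j + 1 by omega, show 2 * n - (n + j) = n - j by omega,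
      show 2 * (n + j) + 3 - 2 * n = 2 * j + 3 by omega, ← mul_assoc, ← mul_assoc] at ratio
  · rw [gt_iff_lt, spinMultiplicity_lt_succ_iff (by omega) (by omega),
      show 2 * (n + j) + 2 - 2 * n = 2 * (j + 1) by omega, mul_pow]
    omega
end

section
/- Fix an integer s ≥ 1 and for j ∈ {0, 1} let A_n(j) denote the number of sequences (a₁, …, a_n) with each a_i an integer satisfying −s ≤ a_i ≤ s and a₁ + ⋯ + a_n = j. Then (A_n(0) − A_n(1)) · n^{3/2} / (2s+1)^n converges to 3√6/(4√π·(s(s+1))^{3/2}) as n → ∞. -/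
open Filter

/-!
By Fourier inversion, the number of `n`-step walks from `0` to `j` with steps in a symmetric finite
set `S` is `#S ^ n / π * ∫₀^π φ(t) ^ n cos (j t) dt`, where `φ` is the characteristic function of a
uniform step. Hence the difference of the counts at `j` and `k` is governed by
`∫₀^π φ(t) ^ n (cos (j t) - cos (k t)) dt`. If the differences of steps generate `ℤ`, then `|φ| < 1`
on `(0, π]`, so only `t` of order `n ^ (-1/2)` matters; there `φ(t) ^ n` looks like
`exp (-n v t ^ 2 / 2)` with `v` the variance of a step, while the second factor looks like
`(k ^ 2 - j ^ 2) t ^ 2 / 2`. This quadratic vanishing turns the usual decay `n ^ (-1/2)` of the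
local limit theorem into `n ^ (-3/2)`.
-/

section EndpointExtension

open Set
open scoped Topology

variable {α β : Type*} [TopologicalSpace α] [LinearOrder α] [T1Space α] [TopologicalSpace β]
  {a T : α}

theorem continuousOn_update_Icc_of_tendsto {h : α → β} {b : β} (hh : ContinuousOn h (Ioc a T))
    (hlim : Tendsto h (𝓝[>] a) (𝓝 b)) : ContinuousOn (Function.update h a b) (Icc a T) := by
  rw [continuousOn_update_iff, Icc_sdiff_left]
  exact ⟨hh, fun _ => hlim.mono_left (nhdsWithin_mono a Ioc_subset_Ioi_self)⟩

theorem exists_forall_Ioc_norm_le_of_tendsto {E : Type*} [SeminormedAddCommGroup E]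
    [CompactIccSpace α] {h : α → E} {b : E} (hh : ContinuousOn h (Ioc a T))
    (hlim : Tendsto h (𝓝[>] a) (𝓝 b)) : ∃ C, ∀ t ∈ Ioc a T, ‖h t‖ ≤ C := by
  obtain ⟨C, hC⟩ := isCompact_Icc.exists_bound_of_continuousOn
    (continuousOn_update_Icc_of_tendsto hh hlim)
  refine ⟨C, fun t ht => ?_⟩
  simpa only [Function.update_of_ne ht.1.ne'] using hC t (Ioc_subset_Icc_self ht)

theorem exists_gt_forall_Ioc_le_of_tendsto [CompactIccSpace α] [LinearOrder β]
    [ClosedIicTopology β] [NoMaxOrder β] {h : α → β} {b m : β} (hh : ContinuousOn h (Ioc a T))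
    (hlim : Tendsto h (𝓝[>] a) (𝓝 b)) (hb : m < b) (hm : ∀ t ∈ Ioc a T, m < h t) :
    ∃ c > m, ∀ t ∈ Ioc a T, c ≤ h t := by
  obtain ⟨c, hc, hle⟩ := isCompact_Icc.exists_forall_le'
    (continuousOn_update_Icc_of_tendsto hh hlim) (a := m) fun t ht => by
      rcases eq_or_ne t a with rfl | hta
      · simpa only [Function.update_self] using hb
      · simpa only [Function.update_of_ne hta] using hm t ⟨lt_of_le_of_ne ht.1 hta.symm, ht.2⟩
  refine ⟨c, hc, fun t ht => ?_⟩
  simpa only [Function.update_of_ne ht.1.ne'] using hle t (Ioc_subset_Icc_self ht)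

end EndpointExtension

section LaplaceMethod

open MeasureTheory Set
open scoped Topology

variable {f g h : ℝ → ℝ} {T b κ p q u : ℝ}

theorem tendsto_one_of_tendsto_one_sub_div_rpow (hq : 0 < q)
    (hlim : Tendsto (fun t => (1 - f t) / t ^ q) (𝓝[>] 0) (𝓝 b)) :
    Tendsto f (𝓝[>] 0) (𝓝 1) := by
  have hpow : Tendsto (fun t : ℝ => t ^ q) (𝓝[>] 0) (𝓝 0) := by
    simpa [hq.ne'] using
      ((Real.continuous_rpow_const hq.le).tendsto 0).mono_left nhdsWithin_le_nhds
  have hsub := (hlim.mul hpow).const_sub 1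
  rw [mul_zero, sub_zero] at hsub
  refine hsub.congr' ?_
  filter_upwards [self_mem_nhdsWithin] with t ht
  rw [div_mul_cancel₀ _ (Real.rpow_pos_of_pos ht q).ne', sub_sub_cancel]

theorem exists_pos_forall_Ioc_abs_le_exp_neg_mul_rpow (hq : 0 < q) (hb : 0 < b)
    (hf : ContinuousOn f (Ioc 0 T)) (hf_lt : ∀ t ∈ Ioc 0 T, |f t| < 1)
    (hlim : Tendsto (fun t => (1 - f t) / t ^ q) (𝓝[>] 0) (𝓝 b)) :
    ∃ c > 0, ∀ t ∈ Ioc 0 T, |f t| ≤ Real.exp (-c * t ^ q) := by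
  have hpow (t : ℝ) (ht : t ∈ Ioc 0 T) : 0 < t ^ q := Real.rpow_pos_of_pos ht.1 q
  have hlim_abs : Tendsto (fun t => (1 - |f t|) / t ^ q) (𝓝[>] 0) (𝓝 b) := by
    refine hlim.congr' ?_
    filter_upwards [(tendsto_one_of_tendsto_one_sub_div_rpow hq hlim).eventually_const_lt
      zero_lt_one] with t ht
    rw [abs_of_pos ht]
  have hcont : ContinuousOn (fun t => (1 - |f t|) / t ^ q) (Ioc 0 T) :=
    (continuousOn_const.sub hf.abs).div (Real.continuous_rpow_const hq.le).continuousOn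
      fun t ht => (hpow t ht).ne'
  obtain ⟨c, hc, hle⟩ := exists_gt_forall_Ioc_le_of_tendsto hcont hlim_abs hb
    fun t ht => div_pos (sub_pos.mpr (hf_lt t ht)) (hpow t ht)
  refine ⟨c, hc, fun t ht => ?_⟩
  have hct := (le_div_iff₀ (hpow t ht)).mp (hle t ht)
  linarith [Real.add_one_le_exp (-c * t ^ q)]

theorem tendsto_div_natCast_rpow_nhdsGT_zero (hq : 0 < q) (hu : 0 < u) :
    Tendsto (fun n : ℕ => u / (n : ℝ) ^ q⁻¹) atTop (𝓝[>] 0) := by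
  refine tendsto_nhdsWithin_iff.mpr ⟨?_, ?_⟩
  · exact ((tendsto_rpow_atTop (inv_pos.mpr hq)).comp
      tendsto_natCast_atTop_atTop).const_div_atTop u
  · filter_upwards [eventually_gt_atTop 0] with n hn
    have : (0 : ℝ) < n := Nat.cast_pos.mpr hn
    exact div_pos hu (Real.rpow_pos_of_pos this _)

theorem div_rpow_inv_rpow {x : ℝ} (hu : 0 ≤ u) (hx : 0 ≤ x) (p q : ℝ) :
    (u / x ^ q⁻¹) ^ p = u ^ p / x ^ (p / q) := by
  rw [Real.div_rpow hu (Real.rpow_nonneg hx _), ← Real.rpow_mul hx, inv_mul_eq_div]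

theorem tendsto_rpow_mul_comp_div_rpow (hq : 0 < q) (hu : 0 < u)
    (hlim : Tendsto (fun t => g t / t ^ p) (𝓝[>] 0) (𝓝 κ)) :
    Tendsto (fun n : ℕ => (n : ℝ) ^ (p / q) * g (u / (n : ℝ) ^ q⁻¹)) atTop (𝓝 (κ * u ^ p)) := by
  refine ((hlim.comp (tendsto_div_natCast_rpow_nhdsGT_zero hq hu)).mul_const (u ^ p)).congr' ?_
  filter_upwards [eventually_gt_atTop 0] with n hn
  have hn' : (0 : ℝ) < n := Nat.cast_pos.mpr hn
  have : u ^ p ≠ 0 := (Real.rpow_pos_of_pos hu p).ne'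
  simp only [Function.comp_apply]
  rw [div_rpow_inv_rpow hu.le hn'.le]
  field_simp

theorem tendsto_comp_div_rpow_pow (hq : 0 < q) (hu : 0 < u)
    (hlim : Tendsto (fun t => (1 - f t) / t ^ q) (𝓝[>] 0) (𝓝 b)) :
    Tendsto (fun n : ℕ => f (u / (n : ℝ) ^ q⁻¹) ^ n) atTop (𝓝 (Real.exp (-b * u ^ q))) := by
  have hlin := (tendsto_rpow_mul_comp_div_rpow hq hu hlim).neg
  simp only [div_self hq.ne', Real.rpow_one, ← mul_neg, neg_sub] at hlin
  simpa using Real.tendsto_one_add_pow_exp_of_tendsto hlin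

theorem natCast_rpow_mul_integral_eq_integral_comp_div_rpow {n : ℕ} (hn : 0 < n) (h : ℝ → ℝ)
    (p q : ℝ) :
    (n : ℝ) ^ ((p + 1) / q) * ∫ t in Ioi 0, h t =
      ∫ u in Ioi 0, (n : ℝ) ^ (p / q) * h (u / (n : ℝ) ^ q⁻¹) := by
  have hn' : (0 : ℝ) < n := Nat.cast_pos.mpr hn
  simp_rw [integral_const_mul, div_eq_mul_inv _ ((n : ℝ) ^ q⁻¹)]
  rw [integral_comp_mul_right_Ioi _ _ (by positivity), zero_mul, inv_inv, smul_eq_mul, ← mul_assoc,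
    ← Real.rpow_add hn', add_div, one_div]

theorem natCast_rpow_mul_norm_comp_div_rpow_le {n : ℕ} {c C : ℝ} (hn : 0 < n) (hu : 0 < u)
    (hq : q ≠ 0)
    (hle : ∀ t > 0, ‖h t‖ ≤ C * t ^ p * Real.exp (-c * t ^ q) ^ n) :
    ‖(n : ℝ) ^ (p / q) * h (u / (n : ℝ) ^ q⁻¹)‖ ≤ C * (u ^ p * Real.exp (-c * u ^ q)) := by
  have hn' : (0 : ℝ) < n := Nat.cast_pos.mpr hn
  have hexp : Real.exp (-c * (u / (n : ℝ) ^ q⁻¹) ^ q) ^ n = Real.exp (-c * u ^ q) := by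
    rw [← Real.exp_nat_mul, div_rpow_inv_rpow hu.le hn'.le, div_self hq, Real.rpow_one]
    field_simp
  rw [norm_mul, Real.norm_of_nonneg (by positivity)]
  calc (n : ℝ) ^ (p / q) * ‖h (u / (n : ℝ) ^ q⁻¹)‖
      ≤ (n : ℝ) ^ (p / q) * (C * (u ^ p / (n : ℝ) ^ (p / q)) * Real.exp (-c * u ^ q)) := by
        gcongr
        rw [← hexp, ← div_rpow_inv_rpow hu.le hn'.le]
        exact hle _ (by positivity)
    _ = C * (u ^ p * Real.exp (-c * u ^ q)) := by field_simp

theorem measurable_indicator_of_continuousOn {α β : Type*} [TopologicalSpace α] [MeasurableSpace α]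
    [OpensMeasurableSpace α] [TopologicalSpace β] [Zero β] [MeasurableSpace β] [BorelSpace β]
    {s : Set α} {h : α → β} (hs : MeasurableSet s)
    (hh : ContinuousOn h s) : Measurable (s.indicator h) := by
  classical
  rw [← piecewise_eq_indicator]
  exact hh.measurable_piecewise continuousOn_const hs

theorem tendsto_rpow_mul_indicator_comp_div_rpow (hq : 0 < q) (hT : 0 < T) (hu : 0 < u)
    (hf : Tendsto (fun t => (1 - f t) / t ^ q) (𝓝[>] 0) (𝓝 b))
    (hg : Tendsto (fun t => g t / t ^ p) (𝓝[>] 0) (𝓝 κ)) :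
    Tendsto (fun n : ℕ => (n : ℝ) ^ (p / q) *
        (Ioc 0 T).indicator (fun t => f t ^ n * g t) (u / (n : ℝ) ^ q⁻¹))
      atTop (𝓝 (κ * (u ^ p * Real.exp (-b * u ^ q)))) := by
  have hprod := (tendsto_comp_div_rpow_pow hq hu hf).mul (tendsto_rpow_mul_comp_div_rpow hq hu hg)
  rw [show Real.exp (-b * u ^ q) * (κ * u ^ p) = κ * (u ^ p * Real.exp (-b * u ^ q)) by ring]
    at hprod
  refine hprod.congr' ?_
  filter_upwards [(tendsto_div_natCast_rpow_nhdsGT_zero hq hu).eventually (Ioc_mem_nhdsGT hT)]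
    with n hn
  rw [indicator_of_mem (show u / (n : ℝ) ^ q⁻¹ ∈ Ioc 0 T from hn)]
  ring

theorem norm_indicator_pow_mul_le {s : Set ℝ} {c C t : ℝ} {n : ℕ} (hC : 0 ≤ C) (ht : 0 < t)
    (hf : t ∈ s → |f t| ≤ Real.exp (-c * t ^ q)) (hg : t ∈ s → |g t / t ^ p| ≤ C) :
    ‖s.indicator (fun t => f t ^ n * g t) t‖ ≤ C * t ^ p * Real.exp (-c * t ^ q) ^ n := by
  by_cases hts : t ∈ s
  · have hpow := Real.rpow_pos_of_pos ht p
    have hgt : |g t| ≤ C * t ^ p := by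
      simpa only [abs_div, abs_of_pos hpow, div_le_iff₀ hpow] using hg hts
    rw [indicator_of_mem hts, norm_mul, norm_pow, Real.norm_eq_abs, Real.norm_eq_abs, mul_comm]
    gcongr
    exact hf hts
  · rw [indicator_of_notMem hts, norm_zero]
    positivity

/-- **Laplace's method**: the substitution `t = u / n ^ (1 / q)` turns the integrand into one that
converges to `κ * u ^ p * exp (-b * u ^ q)`. -/
theorem tendsto_rpow_mul_integral_pow_mul (hq : 0 < q) (hp : -1 < p) (hT : 0 < T) (hb : 0 < b)
    (hf : ContinuousOn f (Ioc 0 T)) (hg : ContinuousOn g (Ioc 0 T))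
    (hf_lt : ∀ t ∈ Ioc 0 T, |f t| < 1)
    (hf_lim : Tendsto (fun t => (1 - f t) / t ^ q) (𝓝[>] 0) (𝓝 b))
    (hg_lim : Tendsto (fun t => g t / t ^ p) (𝓝[>] 0) (𝓝 κ)) :
    Tendsto (fun n : ℕ => (n : ℝ) ^ ((p + 1) / q) * ∫ t in 0..T, f t ^ n * g t) atTop
      (𝓝 (κ * (b ^ (-(p + 1) / q) * (1 / q) * Real.Gamma ((p + 1) / q)))) := by
  obtain ⟨c, hc, hfc⟩ := exists_pos_forall_Ioc_abs_le_exp_neg_mul_rpow hq hb hf hf_lt hf_lim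
  obtain ⟨C, hgC⟩ := exists_forall_Ioc_norm_le_of_tendsto (hg.div
    (continuousOn_id.rpow_const fun t ht => .inl ht.1.ne')
    fun t ht => (Real.rpow_pos_of_pos ht.1 p).ne') hg_lim
  have hC : 0 ≤ C := (norm_nonneg _).trans (hgC T ⟨hT, le_rfl⟩)
  have hdom : Tendsto (fun n : ℕ => ∫ u in Ioi 0, (n : ℝ) ^ (p / q) *
      (Ioc 0 T).indicator (fun t => f t ^ n * g t) (u / (n : ℝ) ^ q⁻¹)) atTop
      (𝓝 (∫ u in Ioi 0, κ * (u ^ p * Real.exp (-b * u ^ q)))) := by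
    refine tendsto_integral_filter_of_dominated_convergence
      (fun u => C * (u ^ p * Real.exp (-c * u ^ q))) (.of_forall fun n => ?_) ?_
      ((integrableOn_rpow_mul_exp_neg_mul_rpow hp hq hc).const_mul C)
      (ae_restrict_of_forall_mem measurableSet_Ioi fun u hu =>
        tendsto_rpow_mul_indicator_comp_div_rpow hq hT hu hf_lim hg_lim)
    · exact (((measurable_indicator_of_continuousOn measurableSet_Ioc ((hf.pow n).mul hg)).comp
        (measurable_id.div_const _)).const_mul _).aestronglyMeasurable
    · filter_upwards [eventually_gt_atTop 0] with n hn
      exact ae_restrict_of_forall_mem measurableSet_Ioi fun u hu =>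
        natCast_rpow_mul_norm_comp_div_rpow_le hn hu hq.ne' fun t ht =>
          norm_indicator_pow_mul_le hC ht (hfc t) (hgC t)
  rw [integral_const_mul, integral_rpow_mul_exp_neg_mul_rpow hq hp hb] at hdom
  refine hdom.congr' ?_
  filter_upwards [eventually_gt_atTop 0] with n hn
  rw [← natCast_rpow_mul_integral_eq_integral_comp_div_rpow hn, setIntegral_indicator
    measurableSet_Ioc, inter_eq_right.mpr Ioc_subset_Ioi_self,
    intervalIntegral.integral_of_le hT.le]

end LaplaceMethod

section LatticeWalk

open Finset
open scoped Pointwise Real Topology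

/-- The number of `n`-step walks from `0` to `j` on `ℤ` with all steps in `S`, a walk being encoded
by its sequence of steps. -/
def walkCount (S : Finset ℤ) (n : ℕ) (j : ℤ) : ℕ :=
  #{a ∈ Fintype.piFinset fun _ : Fin n => S | ∑ i, a i = j}

/-- The characteristic function of a uniformly distributed step in `S`. Only its real part is
recorded: the imaginary part vanishes when `S` is symmetric. -/
noncomputable def stepCharFun (S : Finset ℤ) (t : ℝ) : ℝ :=
  (∑ x ∈ S, Real.cos (x * t)) / #S

/-- The second moment of a uniformly distributed step in `S`, which is its variance when `S` is
symmetric. -/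
noncomputable def stepVariance (S : Finset ℤ) : ℝ :=
  (∑ x ∈ S, (x : ℝ) ^ 2) / #S

variable {S : Finset ℤ}

theorem sum_exp_int_mul_I_eq_sum_cos (hS : ∀ x ∈ S, -x ∈ S) (t : ℝ) :
    ∑ x ∈ S, Complex.exp (x * t * Complex.I) = (∑ x ∈ S, Real.cos (x * t) : ℝ) := by
  have hsymm : ∑ x ∈ S, Real.sin (x * t) = ∑ x ∈ S, Real.sin ((-x : ℤ) * t) :=
    sum_nbij' Neg.neg Neg.neg hS hS (by simp) (by simp) (by simp)
  have hsin : ∑ x ∈ S, Real.sin (x * t) = 0 := by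
    simp only [Int.cast_neg, neg_mul, Real.sin_neg, sum_neg_distrib] at hsymm
    linarith
  simp_rw [Complex.exp_mul_I, sum_add_distrib, ← sum_mul]
  exact_mod_cast by rw [hsin]; simp

theorem sum_cos_pow_mul_cos (hS : ∀ x ∈ S, -x ∈ S) (n : ℕ) (j : ℤ) (t : ℝ) :
    (∑ x ∈ S, Real.cos (x * t)) ^ n * Real.cos (j * t) =
      ∑ a ∈ Fintype.piFinset fun _ : Fin n => S, Real.cos (((∑ i, a i) - j : ℤ) * t) := by
  have hexp : ((∑ x ∈ S, Real.cos (x * t) : ℝ) : ℂ) ^ n *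
        Complex.exp ((-(j * t) : ℝ) * Complex.I) =
      ∑ a ∈ Fintype.piFinset fun _ : Fin n => S,
        Complex.exp ((((∑ i, a i) - j : ℤ) * t : ℝ) * Complex.I) := by
    rw [← sum_exp_int_mul_I_eq_sum_cos hS, sum_pow', sum_mul]
    refine sum_congr rfl fun a _ => ?_
    rw [← Complex.exp_sum, ← Complex.exp_add, ← sum_mul, ← sum_mul]
    push_cast
    ring_nf
  have hre := congrArg Complex.re hexp
  rw [← Complex.ofReal_pow, Complex.re_ofReal_mul, Complex.re_sum] at hre
  simpa only [Complex.exp_ofReal_mul_I_re, Real.cos_neg] using hre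

theorem integral_cos_int_mul (m : ℤ) :
    ∫ t in 0..π, Real.cos (m * t) = if m = 0 then π else 0 := by
  split_ifs with hm
  · simp [hm]
  · rw [intervalIntegral.integral_comp_mul_left _ (Int.cast_ne_zero.mpr hm)]
    simp [Real.sin_int_mul_pi]

theorem continuous_stepCharFun (S : Finset ℤ) : Continuous (stepCharFun S) := by
  unfold stepCharFun
  fun_prop

theorem integral_stepCharFun_pow_mul_cos (hS : ∀ x ∈ S, -x ∈ S) (n : ℕ) (j : ℤ) :
    ∫ t in 0..π, stepCharFun S t ^ n * Real.cos (j * t) = π * walkCount S n j / (#S : ℝ) ^ n := by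
  simp_rw [stepCharFun, div_pow, div_mul_eq_mul_div, sum_cos_pow_mul_cos hS]
  rw [intervalIntegral.integral_div, intervalIntegral.integral_finsetSum
    fun a _ => Continuous.intervalIntegrable (by fun_prop) _ _]
  simp_rw [integral_cos_int_mul, sub_eq_zero]
  rw [← sum_filter, sum_const, nsmul_eq_mul, mul_comm, walkCount]

theorem walkCount_sub_div_pow_eq_integral (hS : ∀ x ∈ S, -x ∈ S) (n : ℕ) (j k : ℤ) :
    ((walkCount S n j : ℝ) - walkCount S n k) / (#S : ℝ) ^ n =
      (∫ t in 0..π, stepCharFun S t ^ n * (Real.cos (j * t) - Real.cos (k * t))) / π := by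
  have hcont := continuous_stepCharFun S
  simp_rw [mul_sub]
  rw [intervalIntegral.integral_sub (Continuous.intervalIntegrable (by fun_prop) _ _)
    (Continuous.intervalIntegrable (by fun_prop) _ _), integral_stepCharFun_pow_mul_cos hS,
    integral_stepCharFun_pow_mul_cos hS, ← sub_div, ← mul_sub, mul_div_assoc,
    mul_div_cancel_left₀ _ Real.pi_ne_zero]

theorem tendsto_one_sub_cos_mul_div_sq (a : ℝ) :
    Tendsto (fun t => (1 - Real.cos (a * t)) / t ^ 2) (𝓝[≠] 0) (𝓝 (a ^ 2 / 2)) := by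
  have hsinc : Tendsto (fun t => a ^ 2 / 2 * Real.sinc (a * t / 2) ^ 2) (𝓝[≠] 0)
      (𝓝 (a ^ 2 / 2)) := by
    have hcont : Continuous fun t => a ^ 2 / 2 * Real.sinc (a * t / 2) ^ 2 := by fun_prop
    simpa using (hcont.tendsto 0).mono_left nhdsWithin_le_nhds
  refine hsinc.congr' ?_
  filter_upwards [self_mem_nhdsWithin] with t (ht : t ≠ 0)
  rcases eq_or_ne a 0 with rfl | ha
  · simp
  have hcos : Real.cos (a * t) = 1 - 2 * Real.sin (a * t / 2) ^ 2 := by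
    rw [← Real.cos_two_mul_eq_one_sub, mul_div_cancel₀ _ two_ne_zero]
  rw [hcos, Real.sinc_of_ne_zero (by positivity)]
  field_simp
  ring

theorem tendsto_cos_mul_sub_cos_mul_div_sq (a b : ℝ) :
    Tendsto (fun t => (Real.cos (a * t) - Real.cos (b * t)) / t ^ 2) (𝓝[≠] 0)
      (𝓝 ((b ^ 2 - a ^ 2) / 2)) := by
  rw [sub_div]
  refine ((tendsto_one_sub_cos_mul_div_sq b).sub (tendsto_one_sub_cos_mul_div_sq a)).congr
    fun t => ?_
  rw [← sub_div, sub_sub_sub_cancel_left]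

theorem tendsto_one_sub_stepCharFun_div_sq (hS : S.Nonempty) :
    Tendsto (fun t => (1 - stepCharFun S t) / t ^ 2) (𝓝[≠] 0) (𝓝 (stepVariance S / 2)) := by
  have hsum := (tendsto_finsetSum S fun x _ => tendsto_one_sub_cos_mul_div_sq x).div_const (#S : ℝ)
  rw [← sum_div, div_right_comm] at hsum
  refine hsum.congr fun t => ?_
  have hcard : (#S : ℝ) ≠ 0 := Nat.cast_ne_zero.mpr hS.card_ne_zero
  rw [← sum_div, sum_sub_distrib, sum_const, nsmul_one, stepCharFun, div_right_comm, sub_div,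
    div_self hcard]

theorem cos_eq_one_of_closure_sub_eq_top {t ε : ℝ}
    (hgen : AddSubgroup.closure (S - S : Set ℤ) = ⊤) (hε : ε ^ 2 = 1)
    (hcos : ∀ x ∈ S, Real.cos (x * t) = ε) : Real.cos t = 1 := by
  have hsin (x : ℤ) (hx : x ∈ S) : Real.sin (x * t) = 0 := by
    rw [← sq_eq_zero_iff, Real.sin_sq, hcos x hx, hε, sub_self]
  have hone (m : ℤ) (hm : m ∈ AddSubgroup.closure (S - S : Set ℤ)) : Real.cos (m * t) = 1 := by
    induction hm using AddSubgroup.closure_induction with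
    | mem m hm =>
      obtain ⟨x, hx, y, hy, rfl⟩ := hm
      rw [Int.cast_sub, sub_mul, Real.cos_sub, hcos x hx, hcos y hy, hsin x hx, zero_mul, add_zero,
        ← sq, hε]
    | zero => simp
    | add m k _ _ hm hk =>
      rw [Int.cast_add, add_mul, Real.cos_add, hm, hk, Real.sin_eq_zero_iff_cos_eq.mpr (.inl hm)]
      norm_num
    | neg m _ hm => rw [Int.cast_neg, neg_mul, Real.cos_neg, hm]
  simpa using hone 1 (hgen ▸ AddSubgroup.mem_top 1)

theorem abs_stepCharFun_lt_one (hgen : AddSubgroup.closure (S - S : Set ℤ) = ⊤) {t : ℝ}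
    (ht : t ∈ Set.Ioc 0 π) : |stepCharFun S t| < 1 := by
  have hcos_t : Real.cos t ≠ 1 := fun h => ht.1.ne'
    ((Real.cos_eq_one_iff_of_lt_of_lt (by linarith [ht.1, Real.pi_pos])
      (by linarith [ht.2, Real.pi_pos])).mp h)
  have hexists (ε : ℝ) (hε : ε ^ 2 = 1) : ∃ x ∈ S, Real.cos (x * t) ≠ ε := by
    by_contra! hall
    exact hcos_t (cos_eq_one_of_closure_sub_eq_top hgen hε hall)
  obtain ⟨x, hx, hx_ne⟩ := hexists 1 (by norm_num)
  obtain ⟨y, hy, hy_ne⟩ := hexists (-1) (by norm_num)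
  have hupper : ∑ x ∈ S, Real.cos (x * t) < ∑ _x ∈ S, 1 :=
    sum_lt_sum (fun x _ => Real.cos_le_one _) ⟨x, hx, (Real.cos_le_one _).lt_of_ne hx_ne⟩
  have hlower : ∑ _x ∈ S, -1 < ∑ x ∈ S, Real.cos (x * t) :=
    sum_lt_sum (fun x _ => Real.neg_one_le_cos _)
      ⟨y, hy, (Real.neg_one_le_cos _).lt_of_ne hy_ne.symm⟩
  have hcard : (0 : ℝ) < #S := Nat.cast_pos.mpr (card_pos.mpr ⟨x, hx⟩)
  rw [sum_neg_distrib, sum_const, nsmul_one] at hlower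
  rw [sum_const, nsmul_one] at hupper
  rw [stepCharFun, abs_div, abs_of_pos hcard, div_lt_one hcard]
  exact abs_lt.mpr ⟨hlower, hupper⟩

theorem exists_mem_ne_zero_of_closure_sub_eq_top
    (hgen : AddSubgroup.closure (S - S : Set ℤ) = ⊤) : ∃ x ∈ S, x ≠ 0 := by
  by_contra! hzero
  have hcos : Real.cos π = 1 := cos_eq_one_of_closure_sub_eq_top hgen (one_pow 2) fun x hx => by
    simp [hzero x hx]
  norm_num at hcos

theorem stepVariance_pos (hS : ∃ x ∈ S, x ≠ 0) : 0 < stepVariance S := by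
  obtain ⟨x, hx, hx0⟩ := hS
  refine div_pos (sum_pos' (fun y _ => sq_nonneg _) ⟨x, hx, ?_⟩)
    (Nat.cast_pos.mpr (card_pos.mpr ⟨x, hx⟩))
  positivity

theorem walkCount_eq_ncard (S : Finset ℤ) (n : ℕ) (j : ℤ) :
    walkCount S n j = Set.ncard {a : Fin n → ℤ | (∀ i, a i ∈ S) ∧ ∑ i, a i = j} := by
  rw [walkCount, ← Set.ncard_coe_finset]
  simp only [coe_filter, Fintype.mem_piFinset]

theorem gaussian_moment_constant_eq {v : ℝ} (hv : 0 < v) (c : ℝ) :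
    c / 2 * ((v / 2) ^ (-(2 + 1) / 2 : ℝ) * (1 / 2) * Real.Gamma ((2 + 1) / 2)) / π =
      c / (2 * √(2 * π) * v ^ (3 / 2 : ℝ)) := by
  have hGamma : Real.Gamma (3 / 2) = √π / 2 := by
    rw [show (3 : ℝ) / 2 = 1 / 2 + 1 by norm_num, Real.Gamma_add_one (by norm_num),
      Real.Gamma_one_half_eq]
    ring
  have hpi : √π ^ 2 = π := Real.sq_sqrt Real.pi_pos.le
  have htwo : √2 ^ 2 = (2 : ℝ) := Real.sq_sqrt two_pos.le
  rw [neg_div, two_add_one_eq_three, hGamma, Real.rpow_neg (by positivity),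
    Real.div_rpow hv.le two_pos.le, Real.rpow_div_two_eq_sqrt 3 two_pos.le, Real.rpow_ofNat,
    Real.sqrt_mul two_pos.le]
  field_simp
  rw [hpi]
  linear_combination c * π * (√2 ^ 2 + 2) * htwo

theorem neg_mem_Icc_neg {s x : ℤ} (hx : x ∈ Icc (-s) s) : -x ∈ Icc (-s) s := by
  simpa only [mem_Icc, neg_le_neg_iff, neg_le, and_comm] using hx

theorem sum_sq_Icc_neg (s : ℕ) :
    ∑ x ∈ Icc (-s : ℤ) s, (x : ℝ) ^ 2 = s * (s + 1) * (2 * s + 1) / 3 := by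
  induction s with
  | zero => simp
  | succ s ih =>
    have hIcc : Icc (-(s + 1 : ℕ) : ℤ) (s + 1 : ℕ) =
        insert (s + 1 : ℤ) (insert (-(s + 1) : ℤ) (Icc (-s : ℤ) s)) := by
      ext x
      simp only [mem_insert, mem_Icc]
      lia
    rw [hIcc, sum_insert (by simp only [mem_insert, mem_Icc]; lia),
      sum_insert (by simp only [mem_Icc]; lia), ih]
    push_cast
    ring

theorem natCast_card_Icc_neg (s : ℕ) : (#(Icc (-s : ℤ) s) : ℝ) = 2 * s + 1 := by
  have hcard : #(Icc (-s : ℤ) s) = 2 * s + 1 := by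
    rw [Int.card_Icc]
    lia
  exact_mod_cast hcard

theorem stepVariance_Icc_neg (s : ℕ) : stepVariance (Icc (-s : ℤ) s) = s * (s + 1) / 3 := by
  rw [stepVariance, sum_sq_Icc_neg, natCast_card_Icc_neg]
  field_simp

theorem closure_Icc_neg_sub_Icc_neg_eq_top {s : ℕ} (hs : 1 ≤ s) :
    AddSubgroup.closure (Icc (-s : ℤ) s - Icc (-s : ℤ) s : Set ℤ) = ⊤ := by
  rw [eq_top_iff, ← Int.addSubgroupClosure_one, AddSubgroup.closure_le, Set.singleton_subset_iff]
  exact AddSubgroup.subset_closure ⟨1, by simp; lia, 0, by simp, sub_zero 1⟩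

theorem spin_constant_eq {x : ℝ} (hx : 0 ≤ x) :
    1 / (2 * √(2 * π) * (x / 3) ^ (3 / 2 : ℝ)) = 3 * √6 / (4 * √π * x ^ (3 / 2 : ℝ)) := by
  have htwo : √2 ^ 2 = (2 : ℝ) := Real.sq_sqrt two_pos.le
  have hthree : √3 ^ 2 = (3 : ℝ) := Real.sq_sqrt three_pos.le
  have hsix : √6 = √2 * √(3 : ℝ) := by rw [← Real.sqrt_mul two_pos.le]; norm_num
  rw [Real.div_rpow hx three_pos.le, Real.rpow_div_two_eq_sqrt 3 three_pos.le, Real.rpow_ofNat,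
    Real.sqrt_mul two_pos.le, hsix]
  rcases hx.eq_or_lt with rfl | hx
  · simp
  field_simp
  linear_combination 4 * hthree - 6 * htwo

end LatticeWalk

section

open scoped Pointwise Real

/-- The hypothesis on `S - S` says that the walk is aperiodic. -/
theorem stmt_16_general (S : Finset ℤ) (hS : ∀ x ∈ S, -x ∈ S)
    (hgen : AddSubgroup.closure (S - S : Set ℤ) = ⊤) (j k : ℤ) :
    Tendsto (fun n : ℕ =>
        ((walkCount S n j : ℝ) - walkCount S n k) * (n : ℝ) ^ (3 / 2 : ℝ) / (S.card : ℝ) ^ n)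
      atTop (nhds (((k : ℝ) ^ 2 - j ^ 2) / (2 * √(2 * π) * stepVariance S ^ (3 / 2 : ℝ)))) := by
  have hne := exists_mem_ne_zero_of_closure_sub_eq_top hgen
  have hnonempty : S.Nonempty := hne.imp fun _ => And.left
  have hlaplace := tendsto_rpow_mul_integral_pow_mul (p := 2) (q := 2)
    (g := fun t => Real.cos (j * t) - Real.cos (k * t)) two_pos (by norm_num)
    Real.pi_pos (half_pos (stepVariance_pos hne)) (continuous_stepCharFun S).continuousOn
    (Continuous.continuousOn (by fun_prop)) (fun t => abs_stepCharFun_lt_one hgen)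
    (by simpa only [Real.rpow_two] using
      (tendsto_one_sub_stepCharFun_div_sq hnonempty).mono_left (nhdsGT_le_nhdsNE 0))
    (by simpa only [Real.rpow_two] using
      (tendsto_cos_mul_sub_cos_mul_div_sq j k).mono_left (nhdsGT_le_nhdsNE 0))
  rw [← gaussian_moment_constant_eq (stepVariance_pos hne)]
  refine (hlaplace.div_const π).congr fun n => ?_
  rw [mul_div_assoc, ← walkCount_sub_div_pow_eq_integral hS]
  rw [two_add_one_eq_three]
  ring

end

/-- For fixed integer s ≥ 1, with A_n(j) the number of sequences in {−s,…,s}^n summing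
to j, (A_n(0) − A_n(1)) · n^{3/2} / (2s+1)^n → 3√6/(4√π·(s(s+1))^{3/2}) as n → ∞. -/
theorem stmt_16 (s : ℕ) (hs : 1 ≤ s) (A : ℕ → ℤ → ℕ)
    (hA : ∀ n j, A n j = Set.ncard {a : Fin n → ℤ |
        (∀ i, -(s : ℤ) ≤ a i ∧ a i ≤ (s : ℤ)) ∧ (∑ i, a i) = j}) :
    Tendsto (fun n : ℕ =>
        ((A n 0 : ℝ) - (A n 1 : ℝ)) * (n : ℝ) ^ ((3 : ℝ) / 2) / (2 * (s : ℝ) + 1) ^ n)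
      atTop
      (nhds (3 * Real.sqrt 6 /
        (4 * Real.sqrt Real.pi * ((s : ℝ) * ((s : ℝ) + 1)) ^ ((3 : ℝ) / 2)))) := by
  obtain rfl : A = walkCount (Finset.Icc (-s : ℤ) s) := by
    ext n j
    simp only [hA, walkCount_eq_ncard, Finset.mem_Icc]
  simpa only [stepVariance_Icc_neg, natCast_card_Icc_neg, Int.cast_zero, Int.cast_one, one_pow,
    zero_pow two_ne_zero, sub_zero,
    spin_constant_eq (show (0 : ℝ) ≤ s * (s + 1) by positivity)] using
    stmt_16_general _ (fun _ => neg_mem_Icc_neg) (closure_Icc_neg_sub_Icc_neg_eq_top hs) 0 1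
end
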